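/- Let p₁, p₂, p₃ be rational primes such that p₁ ≡ p₂ ≡ p₃ ≡ 2 (mod 9) or p₁ ≡ p₂ ≡ p₃ ≡ 5 (mod 9). Then the equation p₁²x³ + y³ = p₂²p₃²z³ has no nontrivial ℚ₃-solution. -/

import Mathlib

theorem aux_zmod : ∀ x y z : ZMod 9,
    ((2:ZMod 9)^2 * x^3 + y^3 = 2^2*2^2*z^3 → x ≠ 1 ∧ y ≠ 1 ∧ z ≠ 1) ∧
    ((5:ZMod 9)^2 * x^3 + y^3 = 5^2*5^2*z^3 → x ≠ 1 ∧ y ≠ 1 ∧ z ≠ 1) := by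
  set_option maxRecDepth 100000 in
  decide

theorem aux_int (p₁ p₂ p₃ : ℕ)
    (hmod : (p₁ % 9 = 2 ∧ p₂ % 9 = 2 ∧ p₃ % 9 = 2) ∨ (p₁ % 9 = 5 ∧ p₂ % 9 = 5 ∧ p₃ % 9 = 5))
    (x y z : ℚ_[3]) (hx : ‖x‖ ≤ 1) (hy : ‖y‖ ≤ 1) (hz : ‖z‖ ≤ 1)
    (h : (p₁ : ℚ_[3]) ^ 2 * x ^ 3 + y ^ 3 = (p₂ : ℚ_[3]) ^ 2 * (p₃ : ℚ_[3]) ^ 2 * z ^ 3) :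
    x ≠ 1 ∧ y ≠ 1 ∧ z ≠ 1 := by
  obtain ⟨x, rfl⟩ : ∃ t : ℤ_[3], (t : ℚ_[3]) = x := ⟨⟨x, hx⟩, rfl⟩
  obtain ⟨y, rfl⟩ : ∃ t : ℤ_[3], (t : ℚ_[3]) = y := ⟨⟨y, hy⟩, rfl⟩
  obtain ⟨z, rfl⟩ : ∃ t : ℤ_[3], (t : ℚ_[3]) = z := ⟨⟨z, hz⟩, rfl⟩
  have h' : (p₁ : ℤ_[3]) ^ 2 * x ^ 3 + y ^ 3 = (p₂ : ℤ_[3]) ^ 2 * (p₃ : ℤ_[3]) ^ 2 * z ^ 3 := by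
    apply Subtype.ext; push_cast; exact h
  let f : ℤ_[3] →+* ZMod 9 := PadicInt.toZModPow 2
  have h2 := congrArg f h'
  simp only [map_add, map_mul, map_pow, map_natCast] at h2
  have key : f x ≠ 1 ∧ f y ≠ 1 ∧ f z ≠ 1 := by
    have c : ∀ p : ℕ, (p : ZMod 9) = ((p % 9 : ℕ) : ZMod 9) := fun p => by simp
    rw [c p₁, c p₂, c p₃] at h2
    rcases hmod with ⟨a, b, d⟩ | ⟨a, b, d⟩ <;> rw [a, b, d] at h2
    · exact (aux_zmod _ _ _).1 h2
    · exact (aux_zmod _ _ _).2 h2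
  refine ⟨fun e => key.1 ?_, fun e => key.2.1 ?_, fun e => key.2.2 ?_⟩
  all_goals
    first
    | rw [show x = 1 from Subtype.ext (by simpa using e), map_one]
    | rw [show y = 1 from Subtype.ext (by simpa using e), map_one]
    | rw [show z = 1 from Subtype.ext (by simpa using e), map_one]

/-- if `p₁, p₂, p₃` are rational primes all `≡ 2 (mod 9)` or all
`≡ 5 (mod 9)`, then `p₁² x³ + y³ = p₂² p₃² z³` has no nontrivial `ℚ₃`-solution. -/
theorem stmt10 (p₁ p₂ p₃ : ℕ) (hp₁ : p₁.Prime) (hp₂ : p₂.Prime) (hp₃ : p₃.Prime)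
    (hmod : (p₁ % 9 = 2 ∧ p₂ % 9 = 2 ∧ p₃ % 9 = 2) ∨ (p₁ % 9 = 5 ∧ p₂ % 9 = 5 ∧ p₃ % 9 = 5)) :
    ¬ ∃ x y z : ℚ_[3], ¬(x = 0 ∧ y = 0 ∧ z = 0) ∧
        (p₁ : ℚ_[3]) ^ 2 * x ^ 3 + y ^ 3 = (p₂ : ℚ_[3]) ^ 2 * (p₃ : ℚ_[3]) ^ 2 * z ^ 3 := by
  rintro ⟨x, y, z, hne, h⟩
  have main : ∀ w : ℚ_[3], (w = x ∨ w = y ∨ w = z) → ‖x‖ ≤ ‖w‖ → ‖y‖ ≤ ‖w‖ → ‖z‖ ≤ ‖w‖ → False := by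
    intro w hw hx hy hz
    have hw0 : w ≠ 0 := by
      rintro rfl
      simp only [norm_zero, norm_le_zero_iff] at hx hy hz
      exact hne ⟨hx, hy, hz⟩
    have n : ∀ t : ℚ_[3], ‖t‖ ≤ ‖w‖ → ‖t / w‖ ≤ 1 := fun t ht => by
      rw [norm_div]; exact div_le_one_of_le₀ ht (norm_nonneg _)
    have := aux_int p₁ p₂ p₃ hmod (x / w) (y / w) (z / w) (n _ hx) (n _ hy) (n _ hz) (by
      field_simp; exact h)
    rcases hw with rfl | rfl | rfl
    · exact this.1 (div_self hw0)
    · exact this.2.1 (div_self hw0)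
    · exact this.2.2 (div_self hw0)
  rcases le_total ‖x‖ ‖y‖ with a | a <;> rcases le_total ‖y‖ ‖z‖ with b | b <;>
    rcases le_total ‖x‖ ‖z‖ with c | c
  all_goals
    first
    | exact main x (by simp) (by linarith) (by linarith) (by linarith)
    | exact main y (by simp) (by linarith) (by linarith) (by linarith)
    | exact main z (by simp) (by linarith) (by linarith) (by linarith)
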